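/- Let m be a positive integer and let A, B ⊆ ℤ_m be non-empty. If |A+B| < |A| + |B| - 1, then |Sym(A+B)| > 1. -/

import Mathlib

open Pointwise

/-- The symmetry group of a set `A ⊆ ℤ_m`: all `h` with `A + {h} = A`. -/
def symGroup {m : ℕ} [NeZero m] (A : Finset (ZMod m)) : Finset (ZMod m) :=
  Finset.univ.filter (fun h => A + {h} = A)

/-!
We prove Kneser's inequality `|A| + |B| ≤ |A + B| + |Stab (A + B)|` in an arbitrary abelian group.
The Dyson transform shrinks `B` while preserving `|A| + |B|`; once it can shrink `B` no further,
a translate of `A` is stable under `B - b`. Hence every `a + b` lies in some `C ⊆ A + B` with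
`|A| + |B| ≤ |C| + |Stab C|`. Sets satisfying this last inequality are closed under union: if `y` is
in `C` but not in `D`, then on `y + Stab C + Stab D` membership in `C` depends only on the `Stab D`
coordinate and membership in `D` only on the `Stab C` coordinate, so `C \ D` and `D \ C` contain
translates of sumsets `P + Q` with `P` and `Q` in the two stabilizers. Such sumsets are large, as
`P + q₀` and `p₀ + Q` have at most `|Stab C ∩ Stab D|` common elements.
-/

section Kneser

open AddAction
open scoped Finset

theorem card_add_card_le_card_add_add_card_inf {G : Type*} [AddGroup G] [DecidableEq G]
    {H K : AddSubgroup G} [Finite ↥(H ⊓ K)] {P Q : Finset G} (hP : P.Nonempty) (hQ : Q.Nonempty)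
    (hPH : ∀ p ∈ P, p ∈ H) (hQK : ∀ q ∈ Q, q ∈ K) :
    #P + #Q ≤ #(P + Q) + Nat.card ↥(H ⊓ K) := by
  obtain ⟨p₀, hp₀⟩ := hP
  obtain ⟨q₀, hq₀⟩ := hQ
  have union_subset : (P + {q₀}) ∪ ({p₀} + Q) ⊆ P + Q :=
    Finset.union_subset (Finset.add_subset_add_left (Finset.singleton_subset_iff.2 hq₀))
      (Finset.add_subset_add_right (Finset.singleton_subset_iff.2 hp₀))
  have card_inter : #((P + {q₀}) ∩ ({p₀} + Q)) ≤ Nat.card ↥(H ⊓ K) := by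
    have diff_mem : ∀ z ∈ (P + {q₀}) ∩ ({p₀} + Q), -p₀ + z - q₀ ∈ H ⊓ K := by
      intro z hz
      simp only [Finset.mem_inter, Finset.mem_add, Finset.mem_singleton, exists_eq_left] at hz
      obtain ⟨⟨p, hp, hpz⟩, q, hq, hqz⟩ := hz
      refine AddSubgroup.mem_inf.2 ⟨?_, ?_⟩
      · simpa only [← hpz, ← add_assoc, add_sub_cancel_right] using
          H.add_mem (H.neg_mem (hPH p₀ hp₀)) (hPH p hp)
      · simpa only [← hqz, neg_add_cancel_left] using K.sub_mem (hQK q hq) (hQK q₀ hq₀)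
    rw [← Nat.card_eq_finsetCard]
    refine Nat.card_le_card_of_injective (fun z ↦ ⟨-p₀ + z - q₀, diff_mem z z.2⟩) fun z w hzw ↦ ?_
    simpa only [Subtype.mk.injEq, sub_left_inj, add_right_inj, Subtype.ext_iff] using hzw
  rw [← Finset.card_add_singleton P q₀, ← Finset.card_singleton_add p₀ Q,
    ← Finset.card_union_add_card_inter]
  exact add_le_add (Finset.card_le_card union_subset) card_inter

theorem card_le_card_addSubgroup_of_forall_sub_mem {G : Type*} [AddGroup G] {H : AddSubgroup G}
    [Finite H] {S : Finset G} {b : G} (hS : ∀ s ∈ S, s - b ∈ H) : #S ≤ Nat.card H := by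
  rw [← Nat.card_eq_finsetCard]
  refine Nat.card_le_card_of_injective (fun s ↦ ⟨s - b, hS s s.2⟩) fun s t hst ↦ ?_
  simpa only [Subtype.mk.injEq, sub_left_inj, Subtype.ext_iff] using hst

theorem finite_stabilizer_of_nonempty {G : Type*} [AddGroup G] [DecidableEq G] {C : Finset G}
    (hC : C.Nonempty) : Finite (stabilizer G C) := by
  rw [← stabilizer_coe_finset]
  exact (stabilizer_finite (Finset.coe_nonempty.2 hC) C.finite_toSet).to_subtype

variable {G : Type*} [AddCommGroup G] [DecidableEq G]

theorem card_add_card_le_card_sdiff_add_card_inf_stabilizer {C D P Q : Finset G} {y : G}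
    (hP : P.Nonempty) (hQ : Q.Nonempty)
    (hPC : ∀ p ∈ P, p ∈ stabilizer G C) (hPD : ∀ p ∈ P, p + y ∉ D)
    (hQD : ∀ q ∈ Q, q ∈ stabilizer G D) (hQC : ∀ q ∈ Q, q + y ∈ C) :
    #P + #Q ≤ #(C \ D) + Nat.card ↥(stabilizer G C ⊓ stabilizer G D) := by
  obtain ⟨q₀, hq₀⟩ := hQ
  have := finite_stabilizer_of_nonempty ⟨_, hQC q₀ hq₀⟩
  have : Finite ↥(stabilizer G C ⊓ stabilizer G D) :=
    Finite.of_injective _ (AddSubgroup.inclusion_injective inf_le_left)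
  have translate_subset : (P + Q) + {y} ⊆ C \ D := by
    intro z hz
    obtain ⟨_, hpq, y', hy', rfl⟩ := Finset.mem_add.1 hz
    obtain ⟨p, hp, q, hq, rfl⟩ := Finset.mem_add.1 hpq
    obtain rfl := Finset.mem_singleton.1 hy'
    rw [Finset.mem_sdiff]
    constructor
    · rw [add_assoc]
      exact (mem_stabilizer_finset.1 (hPC p hp) _).2 (hQC q hq)
    · rw [add_right_comm, add_comm]
      exact fun h ↦ hPD p hp ((mem_stabilizer_finset.1 (hQD q hq) _).1 h)
  calc
    #P + #Q ≤ #(P + Q) + Nat.card ↥(stabilizer G C ⊓ stabilizer G D) :=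
      card_add_card_le_card_add_add_card_inf hP ⟨q₀, hq₀⟩ hPC hQD
    _ = #((P + Q) + {y}) + Nat.card ↥(stabilizer G C ⊓ stabilizer G D) := by
      rw [Finset.card_add_singleton]
    _ ≤ #(C \ D) + Nat.card ↥(stabilizer G C ⊓ stabilizer G D) :=
      Nat.add_le_add_right (Finset.card_le_card translate_subset) _

theorem card_stabilizer_le_card_sdiff_or {C D : Finset G} (hCD : ¬ C ⊆ D) (hD : D.Nonempty)
    (hle : Nat.card (stabilizer G D) ≤ Nat.card (stabilizer G C)) :
    Nat.card (stabilizer G C) ≤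
        #(D \ C) + Nat.card ↥(stabilizer G C ⊓ stabilizer G D) ∨
      Nat.card (stabilizer G D) ≤
        #(C \ D) + Nat.card ↥(stabilizer G C ⊓ stabilizer G D) := by
  obtain ⟨y, hyC, hyD⟩ := Finset.not_subset.1 hCD
  have := finite_stabilizer_of_nonempty ⟨y, hyC⟩
  obtain ⟨S, hS⟩ := (Set.toFinite (stabilizer G C : Set G)).exists_finset
  have := finite_stabilizer_of_nonempty hD
  obtain ⟨T, hT⟩ := (Set.toFinite (stabilizer G D : Set G)).exists_finset
  have card_S : Nat.card (stabilizer G C) = #S := Nat.subtype_card S hS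
  have card_T : Nat.card (stabilizer G D) = #T := Nat.subtype_card T hT
  have split_S : #{g ∈ S | g + y ∈ D} + #{g ∈ S | g + y ∉ D} = #S :=
    Finset.card_filter_add_card_filter_not _
  have split_T : #{g ∈ T | g + y ∈ C} + #{g ∈ T | g + y ∉ C} = #T :=
    Finset.card_filter_add_card_filter_not _
  have C_sdiff : #{g ∈ S | g + y ∉ D} + #{g ∈ T | g + y ∈ C} ≤
      #(C \ D) + Nat.card ↥(stabilizer G C ⊓ stabilizer G D) := by
    apply card_add_card_le_card_sdiff_add_card_inf_stabilizer (y := y)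
    · exact ⟨0, Finset.mem_filter.2 ⟨(hS 0).2 (zero_mem _), by rwa [zero_add]⟩⟩
    · exact ⟨0, Finset.mem_filter.2 ⟨(hT 0).2 (zero_mem _), by rwa [zero_add]⟩⟩
    all_goals simp +contextual only [Finset.mem_filter, hS, hT, SetLike.mem_coe,
      implies_true, not_false_eq_true]
  have D_sdiff (hP : Finset.Nonempty {g ∈ S | g + y ∈ D})
      (hQ : Finset.Nonempty {g ∈ T | g + y ∉ C}) :
      #{g ∈ T | g + y ∉ C} + #{g ∈ S | g + y ∈ D} ≤
        #(D \ C) + Nat.card ↥(stabilizer G C ⊓ stabilizer G D) := by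
    rw [inf_comm]
    apply card_add_card_le_card_sdiff_add_card_inf_stabilizer (y := y) hQ hP
    all_goals simp +contextual only [Finset.mem_filter, hS, hT, SetLike.mem_coe,
      implies_true, not_false_eq_true]
  -- If both bounds are available, their sum gives the claim. Otherwise `C_sdiff` alone bounds
  -- one of the stabilizers, hence the smaller one, `stabilizer G D`.
  rcases Finset.eq_empty_or_nonempty {g ∈ S | g + y ∈ D} with hP | hP
  · rw [hP, Finset.card_empty] at split_S
    omega
  rcases Finset.eq_empty_or_nonempty {g ∈ T | g + y ∉ C} with hQ | hQ
  · rw [hQ, Finset.card_empty] at split_T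
    omega
  have := D_sdiff hP hQ
  omega

theorem le_card_union_add_card_stabilizer {C D : Finset G} {n : ℕ}
    (hC : n ≤ #C + Nat.card (stabilizer G C)) (hD : n ≤ #D + Nat.card (stabilizer G D)) :
    n ≤ #(C ∪ D) + Nat.card (stabilizer G (C ∪ D)) := by
  wlog hle : Nat.card (stabilizer G D) ≤ Nat.card (stabilizer G C) generalizing C D
  · rw [Finset.union_comm]
    exact this hD hC (le_of_not_ge hle)
  by_cases hCD : C ⊆ D
  · rwa [Finset.union_eq_right.2 hCD]
  obtain rfl | hD₀ := D.eq_empty_or_nonempty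
  · rwa [Finset.union_empty]
  have card_inf : Nat.card ↥(stabilizer G C ⊓ stabilizer G D) ≤
      Nat.card (stabilizer G (C ∪ D)) := by
    have := finite_stabilizer_of_nonempty (hD₀.mono (Finset.subset_union_right (s₁ := C)))
    refine AddSubgroup.card_le_of_le ?_
    simp only [← stabilizer_coe_finset, Finset.coe_union]
    exact stabilizer_inf_stabilizer_le_stabilizer_union
  have card_D_sdiff : #(D \ C) + #C = #(C ∪ D) := by
    rw [Finset.card_sdiff_add_card, Finset.union_comm]
  have card_C_sdiff : #(C \ D) + #D = #(C ∪ D) := Finset.card_sdiff_add_card C D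
  rcases card_stabilizer_le_card_sdiff_or hCD hD₀ hle with h | h <;> omega

theorem exists_subset_add_le_card_add_card_stabilizer {A B : Finset G} {a b : G}
    (ha : a ∈ A) (hb : b ∈ B) :
    ∃ C ⊆ A + B, a + b ∈ C ∧ #A + #B ≤ #C + Nat.card (stabilizer G C) := by
  induction B using Finset.strongInduction generalizing A with | _ B ih =>
  by_cases hshrink : ∃ a' ∈ A, ∃ b' ∈ B, (b' - b) + a' ∉ A
  · obtain ⟨a', ha', b', hb', hnot⟩ := hshrink
    let T := Finset.addDysonETransform (a' - b) (A, B)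
    have mem_T {c : G} : c ∈ T.2 ↔ c ∈ B ∧ a' - b + c ∈ A := by
      simp only [T, Finset.addDysonETransform_snd, Finset.mem_inter,
        Finset.mem_neg_vadd_finset_iff, vadd_eq_add]
    have hbT : b ∈ T.2 := mem_T.2 ⟨hb, by rwa [sub_add_cancel]⟩
    have hT : T.2 ⊂ B := by
      refine Finset.inter_subset_left.ssubset_of_mem_notMem hb' fun hb'T ↦ hnot ?_
      rw [sub_add_comm]
      exact (mem_T.1 hb'T).2
    obtain ⟨C, hC, hab, hcard⟩ := ih T.2 hT (A := T.1) (Finset.mem_union_left _ ha) hbT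
    have hcard_eq : #T.1 + #T.2 = #A + #B := Finset.addDysonETransform.card _ _
    exact ⟨C, hC.trans (Finset.addDysonETransform.subset _ _), hab, hcard_eq ▸ hcard⟩
  · push Not at hshrink
    refine ⟨A + {b}, Finset.add_subset_add_left (Finset.singleton_subset_iff.2 hb),
      Finset.add_mem_add ha (Finset.mem_singleton_self b), ?_⟩
    have sub_mem : ∀ b' ∈ B, b' - b ∈ stabilizer G (A + {b}) := by
      intro b' hb'
      have : b' - b ∈ stabilizer G A := mem_stabilizer_finset'.2 fun a' ha' ↦ hshrink a' ha' b' hb'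
      rw [mem_stabilizer_iff, ← vadd_add_assoc, mem_stabilizer_iff.1 this]
    have hne : (A + {b}).Nonempty := Finset.Nonempty.add ⟨a, ha⟩ (Finset.singleton_nonempty b)
    have := finite_stabilizer_of_nonempty hne
    rw [Finset.card_add_singleton]
    exact Nat.add_le_add_left (card_le_card_addSubgroup_of_forall_sub_mem sub_mem) _

theorem card_add_card_le_card_add_add_card_stabilizer {A B : Finset G}
    (hA : A.Nonempty) (hB : B.Nonempty) :
    #A + #B ≤ #(A + B) + Nat.card (stabilizer G (A + B)) := by
  choose! C hC using fun (x : G × G) (hx : x ∈ A ×ˢ B) ↦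
    exists_subset_add_le_card_add_card_stabilizer (Finset.mem_product.1 hx).1
      (Finset.mem_product.1 hx).2
  have hAB := hA.product hB
  have sup_eq : (A ×ˢ B).sup' hAB C = A + B := by
    refine le_antisymm (Finset.sup'_le hAB C fun x hx ↦ (hC x hx).1) fun c hc ↦ ?_
    obtain ⟨a, ha, b, hb, rfl⟩ := Finset.mem_add.1 hc
    have hab := Finset.mk_mem_product ha hb
    exact Finset.le_sup' C hab (hC _ hab).2.1
  rw [← sup_eq]
  exact Finset.sup'_induction (p := fun D ↦ #A + #B ≤ #D + Nat.card (stabilizer G D)) hAB C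
    (fun _ hD _ hE ↦ le_card_union_add_card_stabilizer hD hE) fun x hx ↦ (hC x hx).2.2

theorem small_sumset_nontrivial_sym_general {A B : Finset G} (hA : A.Nonempty) (hB : B.Nonempty)
    (h : #(A + B) + 1 < #A + #B) : 1 < Nat.card (stabilizer G (A + B)) := by
  have := card_add_card_le_card_add_add_card_stabilizer hA hB
  omega

end Kneser

theorem card_symGroup {m : ℕ} [NeZero m] (A : Finset (ZMod m)) :
    (symGroup A).card = Nat.card (AddAction.stabilizer (ZMod m) A) := by
  refine (Nat.subtype_card (symGroup A) fun h ↦ ?_).symm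
  rw [symGroup, Finset.mem_filter_univ, AddAction.mem_stabilizer_iff, add_comm,
    ← vadd_eq_add, Finset.singleton_vadd]

/-- If `|A+B| < |A| + |B| - 1` for non-empty `A, B ⊆ ℤ_m`, then `|Sym(A+B)| > 1`. -/
theorem small_sumset_nontrivial_sym (m : ℕ) [NeZero m] (A B : Finset (ZMod m))
    (hA : A.Nonempty) (hB : B.Nonempty)
    (h : ((A + B).card : ℤ) < (A.card : ℤ) + (B.card : ℤ) - 1) :
    1 < (symGroup (A + B)).card := by
  rw [card_symGroup]
  exact small_sumset_nontrivial_sym_general hA hB (by omega)
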